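/- Let S be a finite set of n points in the plane in convex position. Then every edge-labeled tree in ℒ(S) can be transformed into any other edge-labeled tree in ℒ(S) by a sequence of at most 3 simultaneous exchanges (with labels transferred along each exchange). -/

import Mathlib

open scoped Classical

noncomputable section

/-- Points in the plane. -/
abbrev Pt : Type := ℝ × ℝ

/-- The closed straight-line segment spanned by an (unordered) edge. -/
def segOf (e : Sym2 Pt) : Set Pt :=
  Sym2.lift ⟨fun p q => segment ℝ p q, fun p q => segment_symm ℝ p q⟩ e

/-- The set of endpoints of an edge. -/
def epts (e : Sym2 Pt) : Set Pt := {p | p ∈ e}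

/-- Two edges intersect in at most common endpoints (they do not cross). -/
def NoCrossPair (e f : Sym2 Pt) : Prop := segOf e ∩ segOf f ⊆ epts e ∩ epts f

/-- A set of edges is noncrossing: any two distinct edges meet in at most a common endpoint. -/
def NoCross (E : Finset (Sym2 Pt)) : Prop := ∀ e ∈ E, ∀ f ∈ E, e ≠ f → NoCrossPair e f

/-- `E` is the edge set of a noncrossing straight-line spanning tree on the point set `S`:
all edges are nondegenerate with endpoints in `S`, pairwise noncrossing, there are
`|S| - 1` of them, and they connect all of `S`. -/
def IsPST (S : Finset Pt) (E : Finset (Sym2 Pt)) : Prop :=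
  (∀ e ∈ E, ¬ e.IsDiag ∧ ∀ p ∈ e, p ∈ S) ∧
  NoCross E ∧ E.card + 1 = S.card ∧
  ∀ p ∈ S, ∀ q ∈ S, Relation.ReflTransGen (fun a b => s(a, b) ∈ E) p q

/-- `S` is in general position: no three of its points are collinear. -/
def GenPos (S : Finset Pt) : Prop :=
  ∀ p ∈ S, ∀ q ∈ S, ∀ r ∈ S, p ≠ q → p ≠ r → q ≠ r → ¬ Collinear ℝ ({p, q, r} : Set Pt)

/-- `S` is in convex position: every point of `S` is a vertex of the convex hull of `S`. -/
def ConvexPos (S : Finset Pt) : Prop :=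
  ∀ p ∈ S, p ∉ convexHull ℝ ((S : Set Pt) \ {p})

/-- The open interior of the triangle with vertices `p`, `q`, `r`. -/
def triInt (p q r : Pt) : Set Pt := interior (convexHull ℝ ({p, q, r} : Set Pt))

/-- `y` can be reached from `x` by a sequence of at most `m` `step`-operations. -/
def ReachesIn {α : Type*} (step : α → α → Prop) (m : ℕ) (x y : α) : Prop :=
  ∃ k ≤ m, ∃ f : ℕ → α, f 0 = x ∧ f k = y ∧ ∀ i < k, step (f i) (f (i + 1))

/-- A simultaneous rotation from `E₁` to `E₂`: a bijection `π` between the removed and the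
inserted edges such that each `e` shares an endpoint with `π e` and `π e` crosses no edge
of `E₁`. -/
def SimRotation (S : Finset Pt) (E₁ E₂ : Finset (Sym2 Pt)) : Prop :=
  IsPST S E₁ ∧ IsPST S E₂ ∧ ∃ π : Sym2 Pt → Sym2 Pt,
    Set.BijOn π ↑(E₁ \ E₂) ↑(E₂ \ E₁) ∧
    ∀ e ∈ E₁ \ E₂, (∃ p, p ∈ e ∧ p ∈ π e) ∧ ∀ f ∈ E₁, NoCrossPair (π e) f

/-- An empty-triangle rotation replaces an edge `pq` by an adjacent edge `pr` such that
no edge of either tree meets the interior of the triangle `pqr`. -/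
def EmptyTriRot (S : Finset Pt) (E₁ E₂ : Finset (Sym2 Pt)) : Prop :=
  IsPST S E₁ ∧ IsPST S E₂ ∧ ∃ p q r : Pt,
    E₁ \ E₂ = {s(p, q)} ∧ E₂ \ E₁ = {s(p, r)} ∧
    ∀ g ∈ E₁ ∪ E₂, Disjoint (segOf g) (triInt p q r)

/-- A simultaneous empty-triangle rotation. -/
def SimEmptyTriRot (S : Finset Pt) (E₁ E₂ : Finset (Sym2 Pt)) : Prop :=
  IsPST S E₁ ∧ IsPST S E₂ ∧ ∃ π : Sym2 Pt → Sym2 Pt,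
    Set.BijOn π ↑(E₁ \ E₂) ↑(E₂ \ E₁) ∧
    ∀ e ∈ E₁ \ E₂, ∃ p q r : Pt, e = s(p, q) ∧ π e = s(p, r) ∧
      ∀ g ∈ E₁ ∪ E₂, Disjoint (segOf g) (triInt p q r)

/-- An edge slide replaces `pq` by `pr`, where `qr` is an edge of both trees and no edge of
either tree meets the interior of the triangle `pqr`. -/
def EdgeSlide (S : Finset Pt) (E₁ E₂ : Finset (Sym2 Pt)) : Prop :=
  IsPST S E₁ ∧ IsPST S E₂ ∧ ∃ p q r : Pt,
    E₁ \ E₂ = {s(p, q)} ∧ E₂ \ E₁ = {s(p, r)} ∧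
    s(q, r) ∈ E₁ ∧ s(q, r) ∈ E₂ ∧
    ∀ g ∈ E₁ ∪ E₂, Disjoint (segOf g) (triInt p q r)

/-- A simultaneous edge slide. -/
def SimEdgeSlide (S : Finset Pt) (E₁ E₂ : Finset (Sym2 Pt)) : Prop :=
  IsPST S E₁ ∧ IsPST S E₂ ∧ ∃ π : Sym2 Pt → Sym2 Pt,
    Set.BijOn π ↑(E₁ \ E₂) ↑(E₂ \ E₁) ∧
    ∀ e ∈ E₁ \ E₂, ∃ p q r : Pt, e = s(p, q) ∧ π e = s(p, r) ∧
      s(q, r) ∈ E₁ ∧ s(q, r) ∈ E₂ ∧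
      ∀ g ∈ E₁ ∪ E₂, Disjoint (segOf g) (triInt p q r)

/-- `e` is an edge of the convex hull of `S`: it joins two distinct points of `S` and its
segment lies on the boundary of the convex hull of `S`. -/
def IsHullEdge (S : Finset Pt) (e : Sym2 Pt) : Prop :=
  ∃ u v : Pt, e = s(u, v) ∧ u ∈ S ∧ v ∈ S ∧ u ≠ v ∧
    segment ℝ u v ⊆ frontier (convexHull ℝ (S : Set Pt))

/-- The spanning star centered at `v`. -/
def starAt (S : Finset Pt) (v : Pt) : Finset (Sym2 Pt) := (S.erase v).image (fun w => s(v, w))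

/-- An edge-labeled tree: an edge set together with a labeling function. -/
abbrev LTree := Finset (Sym2 Pt) × (Sym2 Pt → ℕ)

/-- `T` is an edge-labeled noncrossing straight-line spanning tree on `S`: its edge set is in
`𝒯(S)` and its labeling is a bijection from the edges onto `{1, …, |S| - 1}`
(normalized to `0` on non-edges). -/
def IsLabeledPST (S : Finset Pt) (T : LTree) : Prop :=
  IsPST S T.1 ∧ Set.BijOn T.2 ↑T.1 (Set.Icc 1 (S.card - 1)) ∧ ∀ e, e ∉ T.1 → T.2 e = 0

/-- A simultaneous exchange on edge-labeled trees: an arbitrary bijection between removed and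
inserted edges transferring labels, all common edges keeping their labels. -/
def LabSimExchange (S : Finset Pt) (T₁ T₂ : LTree) : Prop :=
  IsLabeledPST S T₁ ∧ IsLabeledPST S T₂ ∧ ∃ π : Sym2 Pt → Sym2 Pt,
    Set.BijOn π ↑(T₁.1 \ T₂.1) ↑(T₂.1 \ T₁.1) ∧
    (∀ e ∈ T₁.1 \ T₂.1, T₂.2 (π e) = T₁.2 e) ∧
    ∀ e ∈ T₁.1 ∩ T₂.1, T₂.2 e = T₁.2 e

/-- A rotation on edge-labeled trees: the removed and inserted edges share an endpoint and do
not cross, the label of the removed edge is transferred, and all other labels are kept. -/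
def LabRotation (S : Finset Pt) (T₁ T₂ : LTree) : Prop :=
  IsLabeledPST S T₁ ∧ IsLabeledPST S T₂ ∧ ∃ e₁ e₂ : Sym2 Pt,
    T₁.1 \ T₂.1 = {e₁} ∧ T₂.1 \ T₁.1 = {e₂} ∧
    (∃ p, p ∈ e₁ ∧ p ∈ e₂) ∧ NoCrossPair e₁ e₂ ∧
    T₂.2 e₂ = T₁.2 e₁ ∧ ∀ e ∈ T₁.1 ∩ T₂.1, T₂.2 e = T₁.2 e

/-- An edge slide on edge-labeled trees, transferring the label of the slid edge. -/
def LabEdgeSlide (S : Finset Pt) (T₁ T₂ : LTree) : Prop :=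
  IsLabeledPST S T₁ ∧ IsLabeledPST S T₂ ∧ ∃ p q r : Pt,
    T₁.1 \ T₂.1 = {s(p, q)} ∧ T₂.1 \ T₁.1 = {s(p, r)} ∧
    s(q, r) ∈ T₁.1 ∧ s(q, r) ∈ T₂.1 ∧
    (∀ g ∈ T₁.1 ∪ T₂.1, Disjoint (segOf g) (triInt p q r)) ∧
    T₂.2 (s(p, r)) = T₁.2 (s(p, q)) ∧ ∀ e ∈ T₁.1 ∩ T₂.1, T₂.2 e = T₁.2 e


theorem exch_symm {S : Finset Pt} {T U : LTree} (h : LabSimExchange S T U) :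
    LabSimExchange S U T := by
  obtain ⟨h1, h2, π, hπ, hl, hc⟩ := h
  refine ⟨h2, h1, Function.invFunOn π ↑(T.1 \ U.1), ?_, ?_, ?_⟩
  · exact (Set.bijOn_comm hπ.invOn_invFunOn).mpr hπ
  · intro e he
    have hm : Function.invFunOn π ↑(T.1 \ U.1) e ∈ T.1 \ U.1 :=
      Function.invFunOn_mem (hπ.surjOn (Finset.mem_coe.2 he))
    have := hl _ hm
    rw [hπ.invOn_invFunOn.2 (Finset.mem_coe.2 he)] at this
    exact this.symm
  · intro e he
    rw [Finset.inter_comm] at he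
    exact (hc e he).symm

theorem exch_disj {S : Finset Pt} {T U : LTree} (h1 : IsLabeledPST S T) (h2 : IsLabeledPST S U)
    (hd : Disjoint T.1 U.1) : LabSimExchange S T U := by
  refine ⟨h1, h2, Function.invFunOn U.2 ↑U.1 ∘ T.2, ?_, ?_, ?_⟩
  · rw [Finset.sdiff_eq_self_of_disjoint hd, Finset.sdiff_eq_self_of_disjoint hd.symm]
    exact ((Set.bijOn_comm h2.2.1.invOn_invFunOn).mpr h2.2.1).comp h1.2.1
  · intro e he
    exact h2.2.1.invOn_invFunOn.2 (h1.2.1.mapsTo (Finset.mem_coe.2 (Finset.mem_sdiff.1 he).1))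
  · intro e he
    rw [Finset.disjoint_iff_inter_eq_empty.1 hd] at he
    simp at he

theorem exch_step {S : Finset Pt} {T : LTree} {A : Finset (Sym2 Pt)} (h1 : IsLabeledPST S T)
    (hA : IsPST S A) : ∃ l, IsLabeledPST S (A, l) ∧ LabSimExchange S (A, l) T := by
  have hc : A.card = T.1.card := by
    have := hA.2.2.1
    have := h1.1.2.2.1
    omega
  have hc2 : (A \ T.1).card = (T.1 \ A).card := by
    have a1 := Finset.card_sdiff_add_card_inter A T.1
    have a2 := Finset.card_sdiff_add_card_inter T.1 A
    rw [Finset.inter_comm] at a2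
    omega
  obtain ⟨ρ, hρ⟩ := (Finset.finite_toSet (A \ T.1)).exists_bijOn_of_encard_eq
    (t := (↑(T.1 \ A) : Set (Sym2 Pt))) (by simp only [Set.encard_coe_eq_coe_finsetCard, hc2])
  let σ : Sym2 Pt → Sym2 Pt := fun e => if e ∈ T.1 then e else ρ e
  have hσ : Set.BijOn σ ↑A ↑T.1 := by
    have b1 : Set.BijOn σ ↑(A \ T.1) ↑(T.1 \ A) := hρ.congr (by
      intro e he
      have := (Finset.mem_sdiff.1 (Finset.mem_coe.1 he)).2
      simp [σ, this])
    have b2 : Set.BijOn σ ↑(A ∩ T.1) ↑(A ∩ T.1) := (Set.bijOn_id _).congr (by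
      intro e he
      have := (Finset.mem_inter.1 (Finset.mem_coe.1 he)).2
      simp [σ, this])
    have b3 : Set.BijOn σ (↑(A \ T.1) ∪ ↑(A ∩ T.1)) (↑(T.1 \ A) ∪ ↑(A ∩ T.1)) := by
      refine ⟨?_, ?_, ?_⟩
      · exact b1.mapsTo.union_union b2.mapsTo
      · refine (Set.injOn_union ?_).2 ⟨b1.injOn, b2.injOn, ?_⟩
        · rw [Finset.disjoint_coe, Finset.disjoint_left]
          intro e; simp only [Finset.mem_sdiff, Finset.mem_inter]; tauto
        · intro e he f hf hef
          have m1 := b1.mapsTo he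
          have m2 := b2.mapsTo hf
          rw [hef] at m1
          simp only [Finset.coe_sdiff, Finset.coe_inter, Set.mem_diff, Set.mem_inter_iff] at m1 m2
          exact m1.2 m2.1
      · exact b1.surjOn.union_union b2.surjOn
    convert b3 using 1
    · ext e; simp only [Finset.coe_sdiff, Finset.coe_inter, Set.mem_union, Set.mem_diff, Set.mem_inter_iff]; tauto
    · ext e; simp only [Finset.coe_sdiff, Finset.coe_inter, Set.mem_union, Set.mem_diff, Set.mem_inter_iff]; tauto
  have hL : IsLabeledPST S (A, fun e => if e ∈ A then T.2 (σ e) else 0) := by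
    refine ⟨hA, (h1.2.1.comp hσ).congr ?_, ?_⟩
    · intro e he
      simp [Finset.mem_coe.1 he]
    · intro e he
      simp only at he
      simp [he]
  refine ⟨_, hL, hL, h1, ρ, hρ, ?_, ?_⟩
  · intro e he
    have := Finset.mem_sdiff.1 he
    simp only at this
    simp [σ, this.1, this.2]
  · intro e he
    have := Finset.mem_inter.1 he
    simp only at this
    simp [σ, this.1, this.2]

theorem reach3 {S : Finset Pt} {T a b U : LTree} (h1 : LabSimExchange S T a)
    (h2 : LabSimExchange S a b) (h3 : LabSimExchange S b U) :
    ReachesIn (LabSimExchange S) 3 T U := by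
  refine ⟨3, le_rfl, fun i => if i = 0 then T else if i = 1 then a else if i = 2 then b else U,
    by simp, by simp, ?_⟩
  intro i hi
  interval_cases i <;> simpa

theorem reach2 {S : Finset Pt} {T a U : LTree} (h1 : LabSimExchange S T a)
    (h2 : LabSimExchange S a U) :
    ReachesIn (LabSimExchange S) 3 T U := by
  refine ⟨2, by norm_num, fun i => if i = 0 then T else if i = 1 then a else U,
    by simp, by simp, ?_⟩
  intro i hi
  interval_cases i <;> simpa

theorem reach1 {S : Finset Pt} {T U : LTree} (h1 : LabSimExchange S T U) :
    ReachesIn (LabSimExchange S) 3 T U := by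
  refine ⟨1, by norm_num, fun i => if i = 0 then T else U, by simp, by simp, ?_⟩
  intro i hi
  interval_cases i
  simpa

theorem reach0 {S : Finset Pt} {T : LTree} : ReachesIn (LabSimExchange S) 3 T T :=
  ⟨0, by norm_num, fun _ => T, rfl, rfl, by intro i hi; omega⟩

/-! geometry -/

theorem not_seg {S : Finset Pt} (hS : ConvexPos S) {p x y : Pt} (hp : p ∈ S) (hx : x ∈ S)
    (hy : y ∈ S) (hxp : x ≠ p) (hxy : x ≠ y) : x ∉ segment ℝ p y := by
  intro h
  refine hS x hx ?_
  have m1 : p ∈ (S : Set Pt) \ {x} := ⟨hp, fun h => hxp h.symm⟩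
  have m2 : y ∈ (S : Set Pt) \ {x} := ⟨hy, fun h => hxy h.symm⟩
  exact segment_subset_convexHull m1 m2 h

theorem not_ray {S : Finset Pt} (hS : ConvexPos S) {p x y : Pt} (hp : p ∈ S) (hx : x ∈ S)
    (hy : y ∈ S) (hxp : x ≠ p) (hyp : y ≠ p) (hxy : x ≠ y) {a b : ℝ} (ha : 0 < a) (hb : 0 < b)
    (h : a • (x - p) = b • (y - p)) : False := by
  have key : ∀ {x y : Pt} {a b : ℝ}, 0 < a → 0 < b → a ≤ b → a • (x - p) = b • (y - p) →
      y ∈ segment ℝ p x := by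
    intro x y a b ha hb hab h
    rw [segment_eq_image']
    refine ⟨a / b, ⟨by positivity, (div_le_one hb).2 hab⟩, ?_⟩
    have : (a / b) • (x - p) = y - p := by
      rw [div_eq_inv_mul, mul_smul, h, smul_smul, inv_mul_cancel₀ hb.ne', one_smul]
    simp only [this]
    abel
  rcases le_total a b with hab | hab
  · exact not_seg hS hp hy hx hyp hxy.symm (key ha hb hab h)
  · exact not_seg hS hp hx hy hxp hxy (key hb ha hab h.symm)

theorem star_nc {S : Finset Pt} (hS : ConvexPos S) {p x y : Pt} (hp : p ∈ S) (hx : x ∈ S)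
    (hy : y ∈ S) (hxp : x ≠ p) (hyp : y ≠ p) (hxy : x ≠ y) : NoCrossPair s(p, x) s(p, y) := by
  rintro z ⟨h1, h2⟩
  change z ∈ segment ℝ p x at h1
  change z ∈ segment ℝ p y at h2
  have hz : z = p := by
    rw [segment_eq_image'] at h1 h2
    obtain ⟨a, ⟨ha, -⟩, rfl⟩ := h1
    obtain ⟨b, ⟨hb, -⟩, h⟩ := h2
    simp only at h ⊢
    rcases ha.eq_or_lt with rfl | ha
    · simp
    rcases hb.eq_or_lt with rfl | hb
    · rw [← h]; simp
    exact (not_ray hS hp hx hy hxp hyp hxy ha hb (add_left_cancel h).symm).elim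
  subst hz
  simp [epts]

def Hull (S : Finset Pt) (q r : Pt) : Prop :=
  ∃ f : Pt →L[ℝ] ℝ, ∃ c : ℝ, f q = c ∧ f r = c ∧ ∀ x ∈ S, x ≠ q → x ≠ r → c < f x

theorem Hull.symm {S : Finset Pt} {q r : Pt} (h : Hull S q r) : Hull S r q := by
  obtain ⟨f, c, h1, h2, h3⟩ := h
  exact ⟨f, c, h2, h1, fun x hx a b => h3 x hx b a⟩

theorem ncp_symm {e f : Sym2 Pt} (h : NoCrossPair e f) : NoCrossPair f e :=
  fun z hz => (h hz.symm).symm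

theorem hull_nc {S : Finset Pt} {q r p x : Pt} (h : Hull S q r) (hp : p ∈ S) (hx : x ∈ S)
    (hpq : p ≠ q) (hpr : p ≠ r) (hxq : x ≠ q) : NoCrossPair s(q, r) s(p, x) := by
  obtain ⟨f, c, hq, hr, hf⟩ := h
  rintro z ⟨h1, h2⟩
  change z ∈ segment ℝ q r at h1
  change z ∈ segment ℝ p x at h2
  have hz : f z = c := by
    obtain ⟨a, b, ha, hb, hab, rfl⟩ := h1
    simp only [map_add, map_smul, hq, hr, smul_eq_mul]
    rw [← add_mul, hab, one_mul]
  have hfp := hf p hp hpq hpr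
  obtain ⟨a, b, ha, hb, hab, rfl⟩ := h2
  simp only [map_add, map_smul, smul_eq_mul] at hz
  have hfx : c ≤ f x := by
    by_cases hxr : x = r
    · rw [hxr, hr]
    · exact (hf x hx hxq hxr).le
  have hb1 : b = 1 - a := by linarith
  subst hb1
  have ha0 : a = 0 := by
    by_contra hne
    have : 0 < a := lt_of_le_of_ne ha (Ne.symm hne)
    nlinarith [mul_pos this (sub_pos.2 hfp), mul_nonneg hb (sub_nonneg.2 hfx)]
  subst ha0
  have hxr : x = r := by
    by_contra hxr
    have := hf x hx hxq hxr
    linarith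
  subst hxr
  simp [epts]

theorem extreme {S : Finset Pt} (hS : ConvexPos S) {r : Pt} (hr : r ∈ S) (a b ε : ℝ)
    (hε : ε = 1 ∨ ε = -1)
    (hf : ∀ x ∈ S, x ≠ r → 0 < a * (x.1 - r.1) + b * (x.2 - r.2)) (hne : (S.erase r).Nonempty) :
    ∃ q ∈ S, q ≠ r ∧ ∀ x ∈ S, x ≠ q → x ≠ r →
      0 < ε * ((a * (q.1 - r.1) + b * (q.2 - r.2)) * (-b * (x.1 - r.1) + a * (x.2 - r.2)) -
          (-b * (q.1 - r.1) + a * (q.2 - r.2)) * (a * (x.1 - r.1) + b * (x.2 - r.2))) := by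
  obtain ⟨q, hq, hmin⟩ := (S.erase r).exists_min_image
    (fun x => ε * ((-b * (x.1 - r.1) + a * (x.2 - r.2)) / (a * (x.1 - r.1) + b * (x.2 - r.2)))) hne
  obtain ⟨hqr, hqS⟩ := Finset.mem_erase.1 hq
  refine ⟨q, hqS, hqr, ?_⟩
  intro x hx hxq hxr
  have fq := hf q hqS hqr
  have fx := hf x hx hxr
  have hm := hmin x (Finset.mem_erase.2 ⟨hxr, hx⟩)
  rw [← mul_div_assoc, ← mul_div_assoc, div_le_div_iff₀ fq fx] at hm
  refine lt_of_le_of_ne (by linarith) ?_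
  intro h0
  have h1 : (a * (q.1 - r.1) + b * (q.2 - r.2)) * (-b * (x.1 - r.1) + a * (x.2 - r.2)) -
          (-b * (q.1 - r.1) + a * (q.2 - r.2)) * (a * (x.1 - r.1) + b * (x.2 - r.2)) = 0 := by
    rcases hε with rfl | rfl <;> linarith
  have hab : a ^ 2 + b ^ 2 ≠ 0 := by
    intro h
    have ha : a = 0 := by nlinarith [sq_nonneg a, sq_nonneg b]
    have hb : b = 0 := by nlinarith [sq_nonneg a, sq_nonneg b]
    subst ha hb
    simp at fq
  refine not_ray hS hr hx hqS hxr hqr hxq fq fx ?_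
  ext
  · simp only [Prod.smul_fst, Prod.fst_sub, smul_eq_mul]
    apply mul_left_cancel₀ hab
    linear_combination (-b) * h1
  · simp only [Prod.smul_snd, Prod.snd_sub, smul_eq_mul]
    apply mul_left_cancel₀ hab
    linear_combination a * h1

theorem mkHull {S : Finset Pt} {q r : Pt} (A B : ℝ)
    (h0 : A * (q.1 - r.1) + B * (q.2 - r.2) = 0)
    (h : ∀ x ∈ S, x ≠ q → x ≠ r → 0 < A * (x.1 - r.1) + B * (x.2 - r.2)) : Hull S q r := by
  refine ⟨A • ContinuousLinearMap.fst ℝ ℝ ℝ + B • ContinuousLinearMap.snd ℝ ℝ ℝ,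
    A * r.1 + B * r.2, ?_, ?_, ?_⟩
  · simp; linarith
  · simp
  · intro x hx a b
    have := h x hx a b
    simp; linarith

theorem exists_hull {S : Finset Pt} (hS : ConvexPos S) {r : Pt} (hr : r ∈ S) (hc : 3 ≤ S.card) :
    ∃ q ∈ S, ∃ s ∈ S, q ≠ r ∧ s ≠ r ∧ q ≠ s ∧ Hull S q r ∧ Hull S r s := by
  have hcomp : IsCompact (convexHull ℝ ((S : Set Pt) \ {r})) :=
    (S.finite_toSet.subset Set.sdiff_subset).isCompact_convexHull ℝ
  obtain ⟨f, u, h1, h2⟩ := geometric_hahn_banach_point_closed (convex_convexHull ℝ _)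
    hcomp.isClosed (hS r hr)
  have fexp : ∀ x : Pt, f x = f (1, 0) * x.1 + f (0, 1) * x.2 := by
    intro x
    have : x = x.1 • ((1 : ℝ), (0 : ℝ)) + x.2 • ((0 : ℝ), (1 : ℝ)) := by ext <;> simp
    conv_lhs => rw [this]
    rw [map_add, map_smul, map_smul, smul_eq_mul, smul_eq_mul]
    ring
  generalize f (1, 0) = a at fexp
  generalize f (0, 1) = b at fexp
  have hf : ∀ x ∈ S, x ≠ r → 0 < a * (x.1 - r.1) + b * (x.2 - r.2) := by
    intro x hx hxr
    have := h2 x (subset_convexHull ℝ _ ⟨hx, hxr⟩)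
    have e1 := fexp x
    have e2 := fexp r
    nlinarith
  have hcard : (S.erase r).card = S.card - 1 := Finset.card_erase_of_mem hr
  have hne : (S.erase r).Nonempty := Finset.card_pos.1 (by omega)
  obtain ⟨q, hq, hqr, hq2⟩ := extreme hS hr a b 1 (Or.inl rfl) hf hne
  obtain ⟨s, hs, hsr, hs2⟩ := extreme hS hr a b (-1) (Or.inr rfl) hf hne
  refine ⟨q, hq, s, hs, hqr, hsr, ?_, ?_, Hull.symm ?_⟩
  · rintro rfl
    have : ((S.erase r).erase q).Nonempty := Finset.card_pos.1 (by
      rw [Finset.card_erase_of_mem (Finset.mem_erase.2 ⟨hqr, hq⟩)]; omega)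
    obtain ⟨x, hx⟩ := this
    simp only [Finset.mem_erase] at hx
    have := hq2 x hx.2.2 hx.1 hx.2.1
    have := hs2 x hx.2.2 hx.1 hx.2.1
    linarith
  · refine mkHull
      (-b * (a * (q.1 - r.1) + b * (q.2 - r.2)) - a * (-b * (q.1 - r.1) + a * (q.2 - r.2)))
      (a * (a * (q.1 - r.1) + b * (q.2 - r.2)) - b * (-b * (q.1 - r.1) + a * (q.2 - r.2)))
      (by ring) ?_
    intro x hx h1 h2
    have := hq2 x hx h1 h2
    linarith
  · refine mkHull
      (-(-b * (a * (s.1 - r.1) + b * (s.2 - r.2)) - a * (-b * (s.1 - r.1) + a * (s.2 - r.2))))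
      (-(a * (a * (s.1 - r.1) + b * (s.2 - r.2)) - b * (-b * (s.1 - r.1) + a * (s.2 - r.2))))
      (by ring) ?_
    intro x hx h1 h2
    have := hs2 x hx h1 h2
    linarith

theorem rtg_of_root {S : Finset Pt} {E : Finset (Sym2 Pt)} (v : Pt)
    (h : ∀ x ∈ S, Relation.ReflTransGen (fun a b => s(a, b) ∈ E) v x) :
    ∀ p ∈ S, ∀ q ∈ S, Relation.ReflTransGen (fun a b => s(a, b) ∈ E) p q := by
  intro p hp q hq
  have hs : Std.Symm (fun a b : Pt => s(a, b) ∈ E) := ⟨fun a b h => by rwa [Sym2.eq_swap]⟩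
  exact (Relation.ReflTransGen.stdSymm.symm _ _ (h p hp)).trans (h q hq)

theorem starf_inj (p : Pt) : Function.Injective (fun w : Pt => s(p, w)) := by
  intro a b h
  exact Sym2.congr_right.1 h

theorem star_pst {S : Finset Pt} (hS : ConvexPos S) {v : Pt} (hv : v ∈ S) :
    IsPST S (starAt S v) := by
  refine ⟨?_, ?_, ?_, ?_⟩
  · intro e he
    obtain ⟨w, hw, rfl⟩ := Finset.mem_image.1 he
    rw [Finset.mem_erase] at hw
    refine ⟨by simpa using hw.1.symm, ?_⟩
    intro p hp
    rcases Sym2.mem_iff.1 hp with rfl | rfl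
    exacts [hv, hw.2]
  · intro e he f hf hef
    obtain ⟨w, hw, rfl⟩ := Finset.mem_image.1 he
    obtain ⟨x, hx, rfl⟩ := Finset.mem_image.1 hf
    rw [Finset.mem_erase] at hw hx
    exact star_nc hS hv hw.2 hx.2 hw.1 hx.1 (by rintro rfl; exact hef rfl)
  · unfold starAt
    rw [Finset.card_image_of_injective _ (starf_inj v), Finset.card_erase_add_one hv]
  · refine rtg_of_root v ?_
    intro x hx
    by_cases h : x = v
    · rw [h]
    · exact .single (Finset.mem_image.2 ⟨x, Finset.mem_erase.2 ⟨h, hx⟩, rfl⟩)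

def tr (S : Finset Pt) (p q r : Pt) : Finset (Sym2 Pt) :=
  insert s(q, r) (((S.erase p).erase q).image (fun w => s(p, w)))

theorem tr_pst {S : Finset Pt} (hS : ConvexPos S) {p q r : Pt} (hp : p ∈ S) (hq : q ∈ S)
    (hr : r ∈ S) (hpq : p ≠ q) (hpr : p ≠ r) (hqr : q ≠ r) (hH : Hull S q r) :
    IsPST S (tr S p q r) := by
  refine ⟨?_, ?_, ?_, ?_⟩
  · intro e he
    rcases Finset.mem_insert.1 he with rfl | he
    · refine ⟨by simpa using hqr, ?_⟩
      intro x hx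
      rcases Sym2.mem_iff.1 hx with rfl | rfl
      exacts [hq, hr]
    · obtain ⟨w, hw, rfl⟩ := Finset.mem_image.1 he
      simp only [Finset.mem_erase] at hw
      refine ⟨by simpa using hw.2.1.symm, ?_⟩
      intro x hx
      rcases Sym2.mem_iff.1 hx with rfl | rfl
      exacts [hp, hw.2.2]
  · intro e he f hf hef
    rcases Finset.mem_insert.1 he with rfl | he <;> rcases Finset.mem_insert.1 hf with rfl | hf
    · exact (hef rfl).elim
    · obtain ⟨w, hw, rfl⟩ := Finset.mem_image.1 hf
      simp only [Finset.mem_erase] at hw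
      exact hull_nc hH hp hw.2.2 hpq hpr hw.1
    · obtain ⟨w, hw, rfl⟩ := Finset.mem_image.1 he
      simp only [Finset.mem_erase] at hw
      exact ncp_symm (hull_nc hH hp hw.2.2 hpq hpr hw.1)
    · obtain ⟨w, hw, rfl⟩ := Finset.mem_image.1 he
      obtain ⟨x, hx, rfl⟩ := Finset.mem_image.1 hf
      simp only [Finset.mem_erase] at hw hx
      exact star_nc hS hp hw.2.2 hx.2.2 hw.2.1 hx.2.1 (by rintro rfl; exact hef rfl)
  · unfold tr
    rw [Finset.card_insert_of_notMem, Finset.card_image_of_injective _ (starf_inj p),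
      Finset.card_erase_add_one (Finset.mem_erase.2 ⟨hpq.symm, hq⟩), Finset.card_erase_add_one hp]
    intro h
    obtain ⟨w, hw, h⟩ := Finset.mem_image.1 h
    simp only [Sym2.eq_iff] at h
    tauto
  · refine rtg_of_root p ?_
    have key : ∀ x ∈ S, x ≠ p → x ≠ q → s(p, x) ∈ tr S p q r := by
      intro x hx h1 h2
      exact Finset.mem_insert_of_mem (Finset.mem_image.2 ⟨x, by simp [h1, h2, hx], rfl⟩)
    intro x hx
    by_cases h : x = p
    · rw [h]
    by_cases h2 : x = q
    · subst h2
      refine .tail (.single (key r hr hpr.symm hqr.symm)) ?_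
      rw [Sym2.eq_swap]
      exact Finset.mem_insert_self _ _
    · exact .single (key x hx h h2)

theorem tr_disj {S : Finset Pt} {p q r s : Pt} (hpq : p ≠ q) (hpr : p ≠ r) (hqr : q ≠ r)
    (hps : p ≠ s) (hqs : q ≠ s) : Disjoint (tr S p q r) (tr S q r s) := by
  rw [Finset.disjoint_left]
  intro e he hf
  rcases Finset.mem_insert.1 he with rfl | he <;> rcases Finset.mem_insert.1 hf with hf | hf
  · rw [Sym2.eq_iff] at hf; tauto
  · obtain ⟨w, hw, h⟩ := Finset.mem_image.1 hf
    simp only [Finset.mem_erase] at hw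
    simp only [Sym2.eq_iff] at h
    tauto
  · obtain ⟨w, hw, rfl⟩ := Finset.mem_image.1 he
    simp only [Sym2.eq_iff] at hf
    tauto
  · obtain ⟨w, hw, rfl⟩ := Finset.mem_image.1 he
    obtain ⟨x, hx, h⟩ := Finset.mem_image.1 hf
    simp only [Finset.mem_erase] at hw hx
    simp only [Sym2.eq_iff] at h
    rcases h with h | h
    · exact hpq h.1.symm
    · exact hw.1 h.1.symm

theorem case4 {S : Finset Pt} (hS : ConvexPos S) (hc : 4 ≤ S.card) {T T' : LTree}
    (hT : IsLabeledPST S T) (hT' : IsLabeledPST S T') : ReachesIn (LabSimExchange S) 3 T T' := by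
  obtain ⟨r, hr⟩ : S.Nonempty := Finset.card_pos.1 (by omega)
  obtain ⟨q, hq, s, hs, hqr, hsr, hqs, h1, h2⟩ := exists_hull hS hr (by omega)
  obtain ⟨p, hp, hp2⟩ := Finset.exists_mem_notMem_of_card_lt_card (s := {q, r, s}) (t := S)
    (lt_of_le_of_lt Finset.card_le_three (by omega))
  simp only [Finset.mem_insert, Finset.mem_singleton, not_or] at hp2
  obtain ⟨hpq, hpr, hps⟩ := hp2
  obtain ⟨l, a1, a2⟩ := exch_step hT (tr_pst hS hp hq hr hpq hpr hqr h1)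
  obtain ⟨m, b1, b2⟩ := exch_step hT' (tr_pst hS hq hr hs hqr hqs hsr.symm h2)
  exact reach3 (exch_symm a2) (exch_disj a1 b1 (tr_disj hpq hpr hqr hps hqs)) b2

/-! small cases -/

theorem ltree_ext {S : Finset Pt} {T U : LTree} (hT : IsLabeledPST S T) (hU : IsLabeledPST S U)
    (h : T.1 = U.1) (h2 : ∀ e ∈ T.1, T.2 e = U.2 e) : T = U := by
  refine Prod.ext h (funext fun e => ?_)
  by_cases he : e ∈ T.1
  · exact h2 e he
  · rw [hT.2.2 e he, hU.2.2 e (h ▸ he)]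

theorem case2 {S : Finset Pt} (hc : S.card ≤ 2) {T T' : LTree}
    (hT : IsLabeledPST S T) (hT' : IsLabeledPST S T') : T = T' := by
  have c1 := hT.1.2.2.1
  have c2 := hT'.1.2.2.1
  have hE : ∀ e ∈ T.1, ∀ f ∈ T'.1, e = f := by
    intro e he f hf
    have d1 := hT.1.1 e he
    have d2 := hT'.1.1 f hf
    induction e with | _ a b
    induction f with | _ c d
    simp only [Sym2.mk_isDiag_iff, Sym2.mem_iff, forall_eq_or_imp, forall_eq] at d1 d2
    obtain ⟨hab, ha, hb⟩ := d1
    obtain ⟨hcd, hc', hd⟩ := d2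
    have hs : ({a, b} : Finset Pt) = S := Finset.eq_of_subset_of_card_le
      (by intro x; simp only [Finset.mem_insert, Finset.mem_singleton]; rintro (rfl | rfl) <;> assumption)
      (by rw [Finset.card_pair hab]; exact hc)
    rw [← hs] at hc' hd
    simp only [Finset.mem_insert, Finset.mem_singleton] at hc' hd
    rw [Sym2.eq_iff]
    rcases hc' with rfl | rfl <;> rcases hd with rfl | rfl <;> tauto
  have hEE : T.1 = T'.1 := by
    rcases T.1.eq_empty_or_nonempty with h | ⟨e, he⟩
    · have : T'.1 = ∅ := by
        rw [← Finset.card_eq_zero]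
        rw [h, Finset.card_empty] at c1
        omega
      rw [h, this]
    · apply Finset.eq_of_subset_of_card_le
      · intro x hx
        have : T.1.card = T'.1.card := by omega
        have : 0 < T.1.card := Finset.card_pos.2 ⟨e, he⟩
        obtain ⟨f, hf⟩ := Finset.card_pos.1 (show 0 < T'.1.card by omega)
        rwa [hE x hx f hf]
      · omega
  refine ltree_ext hT hT' hEE ?_
  intro e he
  have k1 := hT.2.1.mapsTo (Finset.mem_coe.2 he)
  have k2 := hT'.2.1.mapsTo (Finset.mem_coe.2 (hEE ▸ he))
  simp only [Set.mem_Icc] at k1 k2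
  omega

def mk2 (x y : Sym2 Pt) : LTree := ({x, y}, fun e => if e = x then 1 else if e = y then 2 else 0)

theorem mk2_lab {S : Finset Pt} (hc : S.card = 3) {x y : Sym2 Pt} (hxy : x ≠ y)
    (h : IsPST S {x, y}) : IsLabeledPST S (mk2 x y) := by
  refine ⟨h, ?_, ?_⟩
  · rw [hc]
    refine ⟨?_, ?_, ?_⟩
    · intro e he
      simp only [mk2, Finset.coe_insert, Finset.coe_singleton, Set.mem_insert_iff, Set.mem_singleton_iff] at he
      rcases he with rfl | rfl <;> simp [mk2, hxy.symm]
    · intro e he f hf hef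
      simp only [mk2, Finset.coe_insert, Finset.coe_singleton, Set.mem_insert_iff, Set.mem_singleton_iff] at he hf
      rcases he with rfl | rfl <;> rcases hf with rfl | rfl <;> simp [mk2, hxy.symm] at hef ⊢
    · intro n hn
      have : n = 1 ∨ n = 2 := by simp only [Set.mem_Icc] at hn; omega
      rcases this with rfl | rfl
      · exact ⟨x, by simp [mk2], by simp [mk2]⟩
      · exact ⟨y, by simp [mk2], by simp [mk2, hxy.symm]⟩
  · intro e he
    simp only [mk2, Finset.mem_insert, Finset.mem_singleton, not_or] at he ⊢
    simp [he.1, he.2]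

theorem mk2_exists {S : Finset Pt} (hc : S.card = 3) {T : LTree} (hT : IsLabeledPST S T) :
    ∃ x ∈ T.1, ∃ y ∈ T.1, x ≠ y ∧ T = mk2 x y := by
  have h1 : (1 : ℕ) ∈ Set.Icc 1 (S.card - 1) := by simp [hc]
  have h2 : (2 : ℕ) ∈ Set.Icc 1 (S.card - 1) := by simp [hc]
  obtain ⟨x, hx, hx1⟩ := hT.2.1.surjOn h1
  obtain ⟨y, hy, hy1⟩ := hT.2.1.surjOn h2
  have hxy : x ≠ y := by rintro rfl; omega
  have hcard := hT.1.2.2.1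
  have hE : ({x, y} : Finset _) = T.1 := Finset.eq_of_subset_of_card_le
      (by intro z; simp only [Finset.mem_insert, Finset.mem_singleton]; rintro (rfl | rfl) <;> assumption)
      (by rw [Finset.card_pair hxy]; omega)
  refine ⟨x, hx, y, hy, hxy, ?_⟩
  refine ltree_ext hT (mk2_lab hc hxy (hE ▸ hT.1)) hE.symm ?_
  intro e he
  rw [← hE] at he
  simp only [Finset.mem_insert, Finset.mem_singleton] at he
  rcases he with rfl | rfl
  · simp [mk2, hx1]
  · simp [mk2, hy1, hxy.symm]

theorem mk2_step1 {S : Finset Pt} {x y z : Sym2 Pt} (hxy : x ≠ y)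
    (hxz : x ≠ z) (hyz : y ≠ z) (h1 : IsLabeledPST S (mk2 x y)) (h2 : IsLabeledPST S (mk2 z y)) :
    LabSimExchange S (mk2 x y) (mk2 z y) := by
  have e1 : (mk2 x y).1 \ (mk2 z y).1 = {x} := by
    ext e; simp only [mk2, Finset.mem_sdiff, Finset.mem_insert, Finset.mem_singleton]
    constructor
    · tauto
    · rintro rfl; tauto
  have e2 : (mk2 z y).1 \ (mk2 x y).1 = {z} := by
    ext e; simp only [mk2, Finset.mem_sdiff, Finset.mem_insert, Finset.mem_singleton]
    constructor
    · tauto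
    · rintro rfl; exact ⟨Or.inl rfl, by rintro (h | h); exacts [hxz h.symm, hyz h.symm]⟩
  refine ⟨h1, h2, fun _ => z, ?_, ?_, ?_⟩
  · rw [e1, e2]; simp
  · rw [e1]; simp [mk2]
  · intro e he
    simp only [mk2, Finset.mem_inter, Finset.mem_insert, Finset.mem_singleton] at he
    have : e = y := by
      rcases he with ⟨rfl | rfl, h | h⟩
      exacts [(hxz h).elim, h, rfl, rfl]
    subst this
    simp [mk2, hxy.symm, hyz]

theorem mk2_step2 {S : Finset Pt} {x y z : Sym2 Pt} (hxy : x ≠ y)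
    (hxz : x ≠ z) (hyz : y ≠ z) (h1 : IsLabeledPST S (mk2 x y)) (h2 : IsLabeledPST S (mk2 x z)) :
    LabSimExchange S (mk2 x y) (mk2 x z) := by
  have e1 : (mk2 x y).1 \ (mk2 x z).1 = {y} := by
    ext e; simp only [mk2, Finset.mem_sdiff, Finset.mem_insert, Finset.mem_singleton]
    constructor
    · tauto
    · rintro rfl; exact ⟨Or.inr rfl, by rintro (h | h); exacts [hxy h.symm, hyz h]⟩
  have e2 : (mk2 x z).1 \ (mk2 x y).1 = {z} := by
    ext e; simp only [mk2, Finset.mem_sdiff, Finset.mem_insert, Finset.mem_singleton]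
    constructor
    · tauto
    · rintro rfl; exact ⟨Or.inr rfl, by rintro (h | h); exacts [hxz h.symm, hyz h.symm]⟩
  refine ⟨h1, h2, fun _ => z, ?_, ?_, ?_⟩
  · rw [e1, e2]; simp
  · rw [e1]; simp [mk2, hxy.symm, hxz.symm]
  · intro e he
    simp only [mk2, Finset.mem_inter, Finset.mem_insert, Finset.mem_singleton] at he
    have : e = x := by
      rcases he with ⟨rfl | rfl, h | h⟩
      exacts [rfl, rfl, h, (hyz h).elim]
    subst this
    simp [mk2]

theorem case3aux {S : Finset Pt} (hc : S.card = 3) {x y x' y' A B C : Sym2 Pt}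
    (hT : IsLabeledPST S (mk2 x y)) (hT' : IsLabeledPST S (mk2 x' y'))
    (sa : IsPST S {A, C}) (sb : IsPST S {A, B}) (sc : IsPST S {B, C})
    (n1 : A ≠ B) (n2 : A ≠ C) (n3 : B ≠ C) (hxy : x ≠ y) (hxy' : x' ≠ y')
    (hx1 : x = A ∨ x = B ∨ x = C) (hy1 : y = A ∨ y = B ∨ y = C)
    (hx2 : x' = A ∨ x' = B ∨ x' = C) (hy2 : y' = A ∨ y' = B ∨ y' = C) :
    ReachesIn (LabSimExchange S) 3 (mk2 x y) (mk2 x' y') := by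
  have pst : ∀ u v, (u = A ∨ u = B ∨ u = C) → (v = A ∨ v = B ∨ v = C) → u ≠ v →
      IsLabeledPST S (mk2 u v) := by
    intro u v hu hv huv
    refine mk2_lab hc huv ?_
    rcases hu with rfl | rfl | rfl <;> rcases hv with rfl | rfl | rfl <;>
      first
      | exact (huv rfl).elim
      | assumption
      | (rw [Finset.pair_comm]; assumption)
  obtain ⟨z, hz, hxz, hyz⟩ : ∃ z, (z = A ∨ z = B ∨ z = C) ∧ x ≠ z ∧ y ≠ z := by
    rcases hx1 with rfl | rfl | rfl <;> rcases hy1 with rfl | rfl | rfl <;>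
      first
      | exact (hxy rfl).elim
      | exact ⟨A, by tauto, by tauto, by tauto⟩
      | exact ⟨B, by tauto, by tauto, by tauto⟩
      | exact ⟨C, by tauto, by tauto, by tauto⟩
  have all : ∀ u, (u = A ∨ u = B ∨ u = C) → u = x ∨ u = y ∨ u = z := by
    intro u hu
    rcases hx1 with rfl | rfl | rfl <;> rcases hy1 with rfl | rfl | rfl <;>
      rcases hz with rfl | rfl | rfl <;> tauto
  have pxy := pst x y hx1 hy1 hxy
  have pyx := pst y x hy1 hx1 hxy.symm
  have pxz := pst x z hx1 hz hxz
  have pzx := pst z x hz hx1 hxz.symm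
  have pyz := pst y z hy1 hz hyz
  have pzy := pst z y hz hy1 hyz.symm
  rcases all x' hx2 with rfl | rfl | rfl <;> rcases all y' hy2 with rfl | rfl | rfl
  · exact (hxy' rfl).elim
  · exact reach0
  · exact reach1 (mk2_step2 hxy hxz hyz pxy pxz)
  · exact reach3 (mk2_step1 hxy hxz hyz pxy pzy)
      (mk2_step2 hyz.symm hxz.symm hxy.symm pzy pzx)
      (mk2_step1 hxz.symm hyz.symm hxy pzx pyx)
  · exact (hxy' rfl).elim
  · exact reach2 (mk2_step2 hxy hxz hyz pxy pxz) (mk2_step1 hxz hxy hyz.symm pxz pyz)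
  · exact reach2 (mk2_step1 hxy hxz hyz pxy pzy) (mk2_step2 hyz.symm hxz.symm hxy.symm pzy pzx)
  · exact reach1 (mk2_step1 hxy hxz hyz pxy pzy)
  · exact (hxy' rfl).elim

theorem case3 {S : Finset Pt} (hS : ConvexPos S) (hc : S.card = 3) {T T' : LTree}
    (hT : IsLabeledPST S T) (hT' : IsLabeledPST S T') : ReachesIn (LabSimExchange S) 3 T T' := by
  obtain ⟨a, b, c, hab, hac, hbc, hSe⟩ := Finset.card_eq_three.1 hc
  obtain ⟨x, hx, y, hy, hxy, rfl⟩ := mk2_exists hc hT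
  obtain ⟨x', hx', y', hy', hxy', rfl⟩ := mk2_exists hc hT'
  have ha : a ∈ S := by simp [hSe]
  have hb : b ∈ S := by simp [hSe]
  have hcS : c ∈ S := by simp [hSe]
  have sa : IsPST S {s(a, b), s(c, a)} := by
    convert star_pst hS ha using 1
    ext e; simp only [starAt, hSe, Finset.mem_image, Finset.mem_erase, Finset.mem_insert, Finset.mem_singleton]
    constructor
    · rintro (rfl | rfl)
      exacts [⟨b, by simp [hab.symm], rfl⟩, ⟨c, by simp [hac.symm], Sym2.eq_swap⟩]
    · rintro ⟨w, ⟨h, rfl | rfl | rfl⟩, rfl⟩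
      exacts [(h rfl).elim, Or.inl rfl, Or.inr Sym2.eq_swap]
  have sb : IsPST S {s(a, b), s(b, c)} := by
    convert star_pst hS hb using 1
    ext e; simp only [starAt, hSe, Finset.mem_image, Finset.mem_erase, Finset.mem_insert, Finset.mem_singleton]
    constructor
    · rintro (rfl | rfl)
      exacts [⟨a, by simp [hab], Sym2.eq_swap⟩, ⟨c, by simp [hbc.symm], rfl⟩]
    · rintro ⟨w, ⟨h, rfl | rfl | rfl⟩, rfl⟩
      exacts [Or.inl Sym2.eq_swap, (h rfl).elim, Or.inr rfl]
  have sc : IsPST S {s(b, c), s(c, a)} := by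
    convert star_pst hS hcS using 1
    ext e; simp only [starAt, hSe, Finset.mem_image, Finset.mem_erase, Finset.mem_insert, Finset.mem_singleton]
    constructor
    · rintro (rfl | rfl)
      exacts [⟨b, by simp [hbc], Sym2.eq_swap⟩, ⟨a, by simp [hac], rfl⟩]
    · rintro ⟨w, ⟨h, rfl | rfl | rfl⟩, rfl⟩
      exacts [Or.inr rfl, Or.inl Sym2.eq_swap, (h rfl).elim]
  have hedge : ∀ U : LTree, IsLabeledPST S U → ∀ e ∈ U.1, e = s(a, b) ∨ e = s(b, c) ∨ e = s(c, a) := by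
    intro U hU e he
    have d := hU.1.1 e he
    induction e with | _ u v
    simp only [Sym2.mk_isDiag_iff, Sym2.mem_iff, forall_eq_or_imp, forall_eq, hSe,
      Finset.mem_insert, Finset.mem_singleton] at d
    obtain ⟨huv, hu, hv⟩ := d
    simp only [Sym2.eq_iff]
    rcases hu with rfl | rfl | rfl <;> rcases hv with rfl | rfl | rfl <;> simp at huv ⊢
  have n1 : s(a, b) ≠ s(b, c) := by simp only [ne_eq, Sym2.eq_iff]; tauto
  have n2 : s(a, b) ≠ s(c, a) := by simp only [ne_eq, Sym2.eq_iff]; tauto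
  have n3 : s(b, c) ≠ s(c, a) := by simp only [ne_eq, Sym2.eq_iff]; tauto
  have hx1 := hedge _ hT _ hx
  have hy1 := hedge _ hT _ hy
  have hx2 := hedge _ hT' _ hx'
  have hy2 := hedge _ hT' _ hy'
  exact case3aux hc hT hT' sa sb sc n1 n2 n3 hxy hxy' hx1 hy1 hx2 hy2

/-- on a point set in convex position, any two edge-labeled trees are connected
by at most `3` simultaneous exchanges. -/
theorem stmt_17 :
    ∀ S : Finset Pt, ConvexPos S →
      ∀ T T' : LTree, IsLabeledPST S T → IsLabeledPST S T' →
        ReachesIn (LabSimExchange S) 3 T T' := by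
  intro S hS T T' hT hT'
  by_cases h2 : S.card ≤ 2
  · rw [case2 h2 hT hT']
    exact reach0
  by_cases h3 : S.card = 3
  · exact case3 hS h3 hT hT'
  · exact case4 hS (by omega) hT hT'
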